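/- Let m,n ≥ 2 and let L ∈ L_{m,n} be a quantum channel with rank Z(L) ≤ m. Then L is an extreme point of L_{m,n} if and only if the only Hermitian mn×mn matrix W (with rows and columns indexed by pairs (i,p), i ∈ {1,…,m}, p ∈ {1,…,n}) satisfying both (a) every vector in the kernel of Z(L) lies in the kernel of W, and (b) the trace of every (i,j) block of W is zero (i.e. ∑_p W((i,p),(j,p)) = 0 for all i,j ∈ {1,…,m}), is W = 0. -/

import Mathlib

open Matrix
open scoped ComplexOrder

/-- The Choi matrix of a linear map `L` from `m × m` to `n × n` complex matrices:
its `((i,p),(j,q))` entry is the `(p,q)` entry of `L(E_{ij})`. -/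
def choi (m n : ℕ) (L : Matrix (Fin m) (Fin m) ℂ →ₗ[ℂ] Matrix (Fin n) (Fin n) ℂ) :
    Matrix (Fin m × Fin n) (Fin m × Fin n) ℂ :=
  Matrix.of fun ip jq => L (Matrix.single ip.1 jq.1 (1 : ℂ)) ip.2 jq.2

/-- `L` is a quantum channel: it admits a Kraus representation
`L(X) = ∑ Aᵢ X Aᵢ*` with `∑ Aᵢ* Aᵢ = I`. -/
def IsChannel (m n : ℕ) (L : Matrix (Fin m) (Fin m) ℂ →ₗ[ℂ] Matrix (Fin n) (Fin n) ℂ) : Prop :=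
  ∃ (k : ℕ) (A : Fin k → Matrix (Fin n) (Fin m) ℂ),
    (∀ X, L X = ∑ i, A i * X * (A i)ᴴ) ∧ ∑ i, (A i)ᴴ * A i = 1

/-- `L` is an extreme point of the convex set of quantum channels. -/
def IsExtremeChannel (m n : ℕ)
    (L : Matrix (Fin m) (Fin m) ℂ →ₗ[ℂ] Matrix (Fin n) (Fin n) ℂ) : Prop :=
  IsChannel m n L ∧
    ∀ L₁ L₂ : Matrix (Fin m) (Fin m) ℂ →ₗ[ℂ] Matrix (Fin n) (Fin n) ℂ,
      IsChannel m n L₁ → IsChannel m n L₂ → ∀ t : ℝ, 0 < t → t < 1 →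
      L = (t : ℂ) • L₁ + ((1 - t : ℝ) : ℂ) • L₂ → L₁ = L ∧ L₂ = L

/-! On Choi matrices the channels are the positive semidefinite `Z` whose partial trace is `1`.
If `Z` is such a matrix and `W` is Hermitian with `ker Z ≤ ker W`, then `W = Z * K * Z` for a
Hermitian `K`; writing `Z = Bᴴ * B`, the matrices `Z ± ε • W = Bᴴ * (1 ± ε • (B * K * Bᴴ)) * B` are
positive semidefinite for small `ε`, so a nonzero `W` of partial trace `0` exhibits `Z` as a
midpoint. Conversely, if `Z = t • Z₁ + (1 - t) • Z₂`, then `t • Z₁ ≤ Z` forces `ker Z ≤ ker Z₁`, so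
`W = Z₁ - Z` satisfies all the conditions. -/

section PosSemidef

variable {𝕜 ι : Type*} [RCLike 𝕜]

open scoped MatrixOrder in
lemma exists_pos_posSemidef_one_add_smul_and_one_sub_smul [Finite ι] [DecidableEq ι]
    {K : Matrix ι ι 𝕜} (hK : K.IsHermitian) :
    ∃ ε : ℝ, 0 < ε ∧ (1 + ε • K).PosSemidef ∧ (1 - ε • K).PosSemidef := by
  have := Fintype.ofFinite ι
  obtain ⟨c, hc, hle⟩ := K.finite_real_spectrum.isBounded.exists_pos_norm_le
  have hlower : algebraMap ℝ _ (-c) ≤ K :=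
    algebraMap_le_of_le_spectrum (fun x hx ↦ (abs_le.mp (hle x hx)).1) hK.isSelfAdjoint
  have hupper : K ≤ algebraMap ℝ _ c :=
    le_algebraMap_of_spectrum_le (fun x hx ↦ (abs_le.mp (hle x hx)).2) hK.isSelfAdjoint
  have hc' : (0 : ℝ) ≤ c⁻¹ := inv_nonneg.mpr hc.le
  refine ⟨c⁻¹, inv_pos.mpr hc, ?_, ?_⟩
  · convert (le_iff.mp hlower).smul hc' using 1
    simp [Algebra.algebraMap_eq_smul_one, smul_add, smul_smul, hc.ne', add_comm]
  · convert (le_iff.mp hupper).smul hc' using 1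
    simp [Algebra.algebraMap_eq_smul_one, smul_sub, smul_smul, hc.ne']

variable [Fintype ι]

lemma exists_isHermitian_mul_mul_self_eq {Z : Matrix ι ι 𝕜} (hZ : Z.IsHermitian) :
    ∃ G : Matrix ι ι 𝕜, G.IsHermitian ∧ Z * G * Z = Z := by
  classical
  have hcont (f : ℝ → ℝ) : ContinuousOn f (spectrum ℝ Z) := Z.finite_real_spectrum.continuousOn f
  -- Since `0⁻¹ = 0`, the functional calculus of `x ↦ x⁻¹` yields the pseudoinverse of `Z`.
  refine ⟨cfc (fun x : ℝ ↦ x⁻¹) Z, cfc_predicate _ Z, ?_⟩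
  calc Z * cfc (fun x : ℝ ↦ x⁻¹) Z * Z
      = cfc (fun x : ℝ ↦ x * x⁻¹ * x) Z := by
        rw [cfc_mul _ _ Z (hcont _) (hcont _), cfc_mul _ _ Z (hcont _) (hcont _),
          cfc_id' ℝ Z hZ.isSelfAdjoint]
    _ = Z := by simp only [mul_inv_mul_cancel, cfc_id' ℝ Z hZ.isSelfAdjoint]

lemma exists_isHermitian_eq_mul_mul_of_ker_le {Z W : Matrix ι ι 𝕜} (hZ : Z.IsHermitian)
    (hW : W.IsHermitian) (hker : ∀ v, Z *ᵥ v = 0 → W *ᵥ v = 0) :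
    ∃ K : Matrix ι ι 𝕜, K.IsHermitian ∧ W = Z * K * Z := by
  classical
  obtain ⟨G, hG, hZGZ⟩ := exists_isHermitian_mul_mul_self_eq hZ
  have hZ_mul : Z * (1 - G * Z) = 0 := by rw [mul_sub, mul_one, ← mul_assoc, hZGZ, sub_self]
  have hW_mul : W * (1 - G * Z) = 0 := by
    refine ext_col fun j ↦ ?_
    exact hker ((1 - G * Z).col j) (congrArg (col · j) hZ_mul)
  have hWGZ : W = W * G * Z := by
    rwa [mul_sub, mul_one, ← mul_assoc, sub_eq_zero] at hW_mul
  have hZGW : W = Z * G * W := by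
    simpa only [conjTranspose_mul, hZ.eq, hW.eq, hG.eq, mul_assoc] using congrArg conjTranspose hWGZ
  refine ⟨G * W * G, ?_, ?_⟩
  · simpa only [hG.eq] using isHermitian_conjTranspose_mul_mul G hW
  · calc W = Z * G * (W * G * Z) := by rw [← hWGZ, ← hZGW]
      _ = Z * (G * W * G) * Z := by simp only [mul_assoc]

open scoped MatrixOrder in
lemma exists_pos_posSemidef_add_smul_and_sub_smul {Z W : Matrix ι ι 𝕜} (hZ : Z.PosSemidef)
    (hW : W.IsHermitian) (hker : ∀ v, Z *ᵥ v = 0 → W *ᵥ v = 0) :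
    ∃ ε : ℝ, 0 < ε ∧ (Z + ε • W).PosSemidef ∧ (Z - ε • W).PosSemidef := by
  classical
  obtain ⟨K, hK, hWK⟩ := exists_isHermitian_eq_mul_mul_of_ker_le hZ.isHermitian hW hker
  obtain ⟨B, hB⟩ := CStarAlgebra.nonneg_iff_eq_star_mul_self.mp hZ.nonneg
  obtain ⟨ε, hε, hadd, hsub⟩ :=
    exists_pos_posSemidef_one_add_smul_and_one_sub_smul (isHermitian_mul_mul_conjTranspose B hK)
  rw [star_eq_conjTranspose] at hB
  have hsmul : ε • W = Bᴴ * (ε • (B * K * Bᴴ)) * B := by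
    simp only [hWK, hB, Matrix.mul_smul, Matrix.smul_mul, mul_assoc]
  refine ⟨ε, hε, ?_, ?_⟩
  · simpa only [mul_add, add_mul, mul_one, ← hB, ← hsmul] using hadd.conjTranspose_mul_mul_same B
  · simpa only [mul_sub, sub_mul, mul_one, ← hB, ← hsmul] using hsub.conjTranspose_mul_mul_same B

lemma mulVec_eq_zero_of_posSemidef_sub {A B : Matrix ι ι 𝕜} (hA : A.PosSemidef)
    (hBA : (B - A).PosSemidef) {v : ι → 𝕜} (hv : B *ᵥ v = 0) : A *ᵥ v = 0 := by
  have hle : star v ⬝ᵥ A *ᵥ v ≤ 0 := by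
    simpa [sub_mulVec, hv] using hBA.dotProduct_mulVec_nonneg v
  exact (hA.dotProduct_mulVec_zero_iff v).mp (hle.antisymm (hA.dotProduct_mulVec_nonneg v))

end PosSemidef

section PartialTrace

variable {R ι κ : Type*} [Fintype κ]

/-- The partial trace over the second tensor factor, i.e. the matrix of traces of the blocks. -/
def partialTrace [Semiring R] : Matrix (ι × κ) (ι × κ) R →ₗ[R] Matrix ι ι R where
  toFun W := of fun i j ↦ ∑ p, W (i, p) (j, p)
  map_add' V W := by ext; simp [Finset.sum_add_distrib]
  map_smul' c W := by ext; simp [Finset.mul_sum]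

lemma partialTrace_apply [Semiring R] (W : Matrix (ι × κ) (ι × κ) R) (i j : ι) :
    partialTrace W i j = ∑ p, W (i, p) (j, p) := rfl

lemma partialTrace_vecMulVec_vec [CommSemiring R] [StarRing R] (A : Matrix κ ι R) :
    partialTrace (vecMulVec (vec A) (star (vec A))) = (Aᴴ * A)ᵀ := by
  ext i j
  simp [partialTrace_apply, vecMulVec_apply, mul_apply, mul_comm]

end PartialTrace

/-- `W` is an admissible direction at `Z`: for positive semidefinite `Z` this says that both
`Z ± ε • W` remain positive semidefinite, with the same partial trace, for small `ε > 0`. -/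
structure IsPerturbation {R ι κ : Type*} [Semiring R] [Star R] [Fintype ι] [Fintype κ]
    (Z W : Matrix (ι × κ) (ι × κ) R) : Prop where
  isHermitian : W.IsHermitian
  ker_le : ∀ v, Z *ᵥ v = 0 → W *ᵥ v = 0
  partialTrace_eq_zero : partialTrace W = 0

/-- The completely positive map `X ↦ ∑ l, A l * X * (A l)ᴴ` with Kraus operators `A l`. -/
def krausMap {R ι κ k : Type*} [CommSemiring R] [Star R] [Fintype ι] [Fintype k]
    (A : k → Matrix κ ι R) : Matrix ι ι R →ₗ[R] Matrix κ κ R where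
  toFun X := ∑ l, A l * X * (A l)ᴴ
  map_add' X Y := by simp only [Matrix.mul_add, Matrix.add_mul, Finset.sum_add_distrib]
  map_smul' c X := by simp [Finset.smul_sum]

section Choi

variable {m n : ℕ} {L L₁ L₂ D : Matrix (Fin m) (Fin m) ℂ →ₗ[ℂ] Matrix (Fin n) (Fin n) ℂ}

/-- The Choi isomorphism: `choi` as a linear equivalence between linear maps and matrices. -/
def choiEquiv (m n : ℕ) : (Matrix (Fin m) (Fin m) ℂ →ₗ[ℂ] Matrix (Fin n) (Fin n) ℂ) ≃ₗ[ℂ]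
    Matrix (Fin m × Fin n) (Fin m × Fin n) ℂ where
  toFun := choi m n
  map_add' _ _ := rfl
  map_smul' _ _ := rfl
  invFun Z :=
    { toFun X := of fun p q ↦ ∑ i, ∑ j, X i j * Z (i, p) (j, q)
      map_add' X Y := by ext; simp [add_mul, Finset.sum_add_distrib]
      map_smul' c X := by ext; simp [Finset.mul_sum, mul_assoc] }
  left_inv L := by
    refine ext_linearMap ℂ fun i j ↦ LinearMap.ext_ring ?_
    ext p q
    simp [choi, single_apply, ite_and]
  right_inv Z := by ext ⟨i, p⟩ ⟨j, q⟩; simp [choi, single_apply, ite_and]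

lemma choiEquiv_apply : choiEquiv m n L = choi m n L := rfl

lemma choi_krausMap {k : Type*} [Fintype k] (A : k → Matrix (Fin n) (Fin m) ℂ) :
    choi m n (krausMap A) = ∑ i, vecMulVec (vec (A i)) (star (vec (A i))) := by
  ext ⟨i, p⟩ ⟨j, q⟩
  simp [choi, krausMap, Matrix.sum_apply, mul_apply, vecMulVec_apply, single_apply, ite_and]

lemma partialTrace_choi_krausMap {k : Type*} [Fintype k] (A : k → Matrix (Fin n) (Fin m) ℂ) :
    partialTrace (choi m n (krausMap A)) = (∑ i, (A i)ᴴ * A i)ᵀ := by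
  simp only [choi_krausMap, map_sum, partialTrace_vecMulVec_vec, transpose_sum]

lemma isChannel_iff_exists_krausMap :
    IsChannel m n L ↔ ∃ (k : ℕ) (A : Fin k → Matrix (Fin n) (Fin m) ℂ),
      L = krausMap A ∧ ∑ i, (A i)ᴴ * A i = 1 := by
  simp only [IsChannel, LinearMap.ext_iff, krausMap, LinearMap.coe_mk, AddHom.coe_mk]

lemma posSemidef_choi_iff_exists_krausMap :
    (choi m n L).PosSemidef ↔
      ∃ (k : ℕ) (A : Fin k → Matrix (Fin n) (Fin m) ℂ), L = krausMap A := by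
  rw [posSemidef_iff_eq_sum_vecMulVec]
  refine exists_congr fun k ↦ (vec_bijective.surjective.comp_left.exists).trans ?_
  refine exists_congr fun A ↦ ?_
  rw [← (choiEquiv m n).injective.eq_iff, choiEquiv_apply, choiEquiv_apply, choi_krausMap]
  rfl

lemma isChannel_iff_posSemidef_choi :
    IsChannel m n L ↔ (choi m n L).PosSemidef ∧ partialTrace (choi m n L) = 1 := by
  rw [isChannel_iff_exists_krausMap, posSemidef_choi_iff_exists_krausMap]
  constructor
  · rintro ⟨k, A, rfl, hA⟩
    exact ⟨⟨k, A, rfl⟩, by rw [partialTrace_choi_krausMap, hA, transpose_one]⟩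
  · rintro ⟨⟨k, A, rfl⟩, htr⟩
    exact ⟨k, A, rfl, by rwa [partialTrace_choi_krausMap, transpose_eq_one] at htr⟩

lemma IsPerturbation.exists_pos_isChannel_add_smul_and_sub_smul
    (hD : IsPerturbation (choi m n L) (choi m n D)) (hL : IsChannel m n L) :
    ∃ ε : ℝ, 0 < ε ∧ IsChannel m n (L + ε • D) ∧ IsChannel m n (L - ε • D) := by
  obtain ⟨hpos, htr⟩ := isChannel_iff_posSemidef_choi.mp hL
  obtain ⟨ε, hε, hadd, hsub⟩ :=
    exists_pos_posSemidef_add_smul_and_sub_smul hpos hD.isHermitian hD.ker_le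
  have htr_smul : partialTrace (ε • choi m n D) = 0 := by
    rw [LinearMapClass.map_smul_of_tower, hD.partialTrace_eq_zero, smul_zero]
  have hchoi_add : choi m n (L + ε • D) = choi m n L + ε • choi m n D := rfl
  have hchoi_sub : choi m n (L - ε • D) = choi m n L - ε • choi m n D := rfl
  refine ⟨ε, hε, ?_, ?_⟩
  · rw [isChannel_iff_posSemidef_choi, hchoi_add, map_add, htr, htr_smul, add_zero]
    exact ⟨hadd, rfl⟩
  · rw [isChannel_iff_posSemidef_choi, hchoi_sub, map_sub, htr, htr_smul, sub_zero]
    exact ⟨hsub, rfl⟩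

lemma IsExtremeChannel.eq_zero_of_isChannel_add_of_isChannel_sub (hL : IsExtremeChannel m n L)
    (hadd : IsChannel m n (L + D)) (hsub : IsChannel m n (L - D)) : D = 0 := by
  have hmid : L = ((1 / 2 : ℝ) : ℂ) • (L + D) + ((1 - 1 / 2 : ℝ) : ℂ) • (L - D) := by
    push_cast
    module
  exact add_eq_left.mp (hL.2 _ _ hadd hsub _ (by norm_num) (by norm_num) hmid).1

lemma isPerturbation_choi_sub_of_eq_smul_add_smul (hL : IsChannel m n L) (hL₁ : IsChannel m n L₁)
    (hL₂ : IsChannel m n L₂) {a b : ℝ} (ha : 0 < a) (hb : 0 ≤ b)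
    (hsum : L = (a : ℂ) • L₁ + (b : ℂ) • L₂) :
    IsPerturbation (choi m n L) (choi m n (L₁ - L)) := by
  obtain ⟨hpos, htr⟩ := isChannel_iff_posSemidef_choi.mp hL
  obtain ⟨hpos₁, htr₁⟩ := isChannel_iff_posSemidef_choi.mp hL₁
  obtain ⟨hpos₂, -⟩ := isChannel_iff_posSemidef_choi.mp hL₂
  have hchoi : choi m n L = (a : ℂ) • choi m n L₁ + (b : ℂ) • choi m n L₂ := by rw [hsum]; rfl
  have hchoi_sub : choi m n (L₁ - L) = choi m n L₁ - choi m n L := rfl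
  have ha' : (0 : ℂ) < a := Complex.zero_lt_real.mpr ha
  have hb' : (0 : ℂ) ≤ b := Complex.zero_le_real.mpr hb
  refine hchoi_sub ▸ ⟨hpos₁.isHermitian.sub hpos.isHermitian, fun v hv ↦ ?_, ?_⟩
  · have hle : (choi m n L - (a : ℂ) • choi m n L₁).PosSemidef := by
      rw [hchoi, add_sub_cancel_left]
      exact hpos₂.smul hb'
    have hv₁ := mulVec_eq_zero_of_posSemidef_sub (hpos₁.smul ha'.le) hle hv
    rw [smul_mulVec, smul_eq_zero_iff_right ha'.ne'] at hv₁
    rw [sub_mulVec, hv, hv₁, sub_zero]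
  · rw [map_sub, htr, htr₁, sub_self]

lemma isExtremeChannel_iff_forall_isPerturbation_choi (hL : IsChannel m n L) :
    IsExtremeChannel m n L ↔ ∀ D, IsPerturbation (choi m n L) (choi m n D) → D = 0 := by
  constructor
  · intro hext D hD
    obtain ⟨ε, hε, hadd, hsub⟩ := hD.exists_pos_isChannel_add_smul_and_sub_smul hL
    have hεD : ε • D = 0 := hext.eq_zero_of_isChannel_add_of_isChannel_sub hadd hsub
    exact (smul_eq_zero_iff_right hε.ne').mp hεD
  · refine fun h ↦ ⟨hL, fun L₁ L₂ hL₁ hL₂ t ht₀ ht₁ hsum ↦ ?_⟩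
    have ht₁' : 0 < 1 - t := sub_pos.mpr ht₁
    have hsum' : L = ((1 - t : ℝ) : ℂ) • L₂ + (t : ℂ) • L₁ := by rw [hsum, add_comm]
    exact ⟨sub_eq_zero.mp <| h _ <|
        isPerturbation_choi_sub_of_eq_smul_add_smul hL hL₁ hL₂ ht₀ ht₁'.le hsum,
      sub_eq_zero.mp <| h _ <|
        isPerturbation_choi_sub_of_eq_smul_add_smul hL hL₂ hL₁ ht₁' ht₀.le hsum'⟩

end Choi

theorem stmt6_general (m n : ℕ)
    (L : Matrix (Fin m) (Fin m) ℂ →ₗ[ℂ] Matrix (Fin n) (Fin n) ℂ) (hL : IsChannel m n L) :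
    IsExtremeChannel m n L ↔
      ∀ W : Matrix (Fin m × Fin n) (Fin m × Fin n) ℂ, W.IsHermitian →
        (∀ v : Fin m × Fin n → ℂ, (choi m n L).mulVec v = 0 → W.mulVec v = 0) →
        (∀ i j : Fin m, ∑ p : Fin n, W (i, p) (j, p) = 0) →
        W = 0 := by
  rw [isExtremeChannel_iff_forall_isPerturbation_choi hL, (choiEquiv m n).surjective.forall]
  refine forall_congr' fun D ↦ ⟨fun h hW hker htr ↦ ?_, fun h hD ↦ ?_⟩
  · exact (choiEquiv m n).map_eq_zero_iff.mpr (h ⟨hW, hker, Matrix.ext htr⟩)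
  · have htr := Matrix.ext_iff.mpr hD.partialTrace_eq_zero
    exact (choiEquiv m n).map_eq_zero_iff.mp (h hD.isHermitian hD.ker_le htr)

/-- for `m,n ≥ 2` and a channel `L` with `rank Z(L) ≤ m`, `L` is extreme iff the
only Hermitian `W` vanishing on the kernel of `Z(L)` and with all block traces zero is `W = 0`. -/
theorem stmt6 (m n : ℕ) (hm : 2 ≤ m) (hn : 2 ≤ n)
    (L : Matrix (Fin m) (Fin m) ℂ →ₗ[ℂ] Matrix (Fin n) (Fin n) ℂ)
    (hL : IsChannel m n L) (hrank : (choi m n L).rank ≤ m) :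
    IsExtremeChannel m n L ↔
      ∀ W : Matrix (Fin m × Fin n) (Fin m × Fin n) ℂ, W.IsHermitian →
        (∀ v : Fin m × Fin n → ℂ, (choi m n L).mulVec v = 0 → W.mulVec v = 0) →
        (∀ i j : Fin m, ∑ p : Fin n, W (i, p) (j, p) = 0) →
        W = 0 :=
  stmt6_general m n L hL
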